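/- Let d,k ≥ 1 and n ≥ 0. Two trees t,t' ∈ T_n satisfy ld(t) ~_k^d ld(t') if and only if t' can be obtained from t by a finite sequence of left or right k-rotations, each performed at a node of left depth at least d−1. Equivalently, the equivalence classes of the relation 't ~ t' iff ld(t) ~_k^d ld(t')' on T_n are precisely the connected components of the Hasse diagram of the (d;k)-order. -/

import Mathlib

/-- Full binary trees (every internal node has exactly two children). -/
inductive BTree : Type
  | leaf : BTree
  | node : BTree → BTree → BTree
deriving DecidableEq

namespace BTree

/-- Number of leaves of a full binary tree. -/
def numLeaves : BTree → ℕ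
  | leaf => 1
  | node l r => l.numLeaves + r.numLeaves

/-- The list of pairs (left depth, right depth) of the leaves, in preorder. -/
def leafDepths : BTree → List (ℕ × ℕ)
  | leaf => [(0, 0)]
  | node l r =>
      (l.leafDepths.map fun p => (p.1 + 1, p.2)) ++ (r.leafDepths.map fun p => (p.1, p.2 + 1))

/-- The left depth sequence `ld(t)` of the leaves of `t`, in preorder. -/
def ld (t : BTree) : List ℕ := t.leafDepths.map Prod.fst

/-- The right depth sequence `rd(t)` of the leaves of `t`, in preorder. -/
def rd (t : BTree) : List ℕ := t.leafDepths.map Prod.snd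

end BTree

/-- `b ~^d c` : the sequences have equal length and agree at every position where
either entry is `< d`. -/
def DepthEq (d : ℕ) : List ℕ → List ℕ → Prop :=
  List.Forall₂ (fun a b => min a b < d → a = b)

/-- `b ~_k c` : entrywise congruence mod `k` (and equal length). -/
def ModListEq (k : ℕ) : List ℕ → List ℕ → Prop :=
  List.Forall₂ (fun a b => a % k = b % k)

/-- The relation `t ~ t'` iff `ld(t) ~^d ld(t')` and `rd(t) ~^e rd(t')`. -/
def DeRel (d e : ℕ) (t t' : BTree) : Prop :=
  DepthEq d t.ld t'.ld ∧ DepthEq e t.rd t'.rd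

/-- The relation `t ~ t'` iff `ld(t) ~_k^d ld(t')` (i.e. `ld(t) ~_k ld(t')` and
`ld(t) ~^d ld(t')`). -/
def DkRel (d k : ℕ) (t t' : BTree) : Prop :=
  ModListEq k t.ld t'.ld ∧ DepthEq d t.ld t'.ld

/-- `T_n`: full binary trees with `n+1` leaves. -/
def Tn (n : ℕ) : Type := {t : BTree // t.numLeaves = n + 1}

/-- `C^{d,e}_n`: the number of equivalence classes of the relation `DeRel d e` on `T_n`. -/
noncomputable def Cde (d e n : ℕ) : ℕ :=
  Nat.card (Quot (fun t t' : Tn n => DeRel d e t.1 t'.1))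

/-- `C^d_{k,n}`: the number of equivalence classes of `ld(t) ~_k^d ld(t')` on `T_n`. -/
noncomputable def Cdk (d k n : ℕ) : ℕ :=
  Nat.card (Quot (fun t t' : Tn n => DkRel d k t.1 t'.1))

/-- Directions to a left or right child. -/
inductive Dir : Type
  | L : Dir
  | R : Dir
deriving DecidableEq

/-- The maximal subtree rooted at the node at position `p` (if such a node exists). -/
def subtreeAt : BTree → List Dir → Option BTree
  | t, [] => some t
  | BTree.leaf, _ :: _ => none
  | BTree.node l _, Dir.L :: p => subtreeAt l p
  | BTree.node _ r, Dir.R :: p => subtreeAt r p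

/-- Replace the maximal subtree rooted at position `p` by `s` (if the position exists). -/
def replaceAt : BTree → List Dir → BTree → Option BTree
  | _, [], s => some s
  | BTree.leaf, _ :: _, _ => none
  | BTree.node l r, Dir.L :: p, s => (replaceAt l p s).map fun l' => BTree.node l' r
  | BTree.node l r, Dir.R :: p, s => (replaceAt r p s).map fun r' => BTree.node l r'

/-- `leftAssoc t₀ [t₁,…,t_m] = t₀ ∧ t₁ ∧ ⋯ ∧ t_m` with `∧` performed left to right. -/
def leftAssoc : BTree → List BTree → BTree := List.foldl BTree.node

/-- `t'` is obtained from `t` by a right `k`-rotation at the node at position `p`: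
the maximal subtree `t₀ ∧ t₁ ∧ ⋯ ∧ t_{k+1}` rooted there (with `∧` performed left to
right) is replaced by `t₀ ∧ (t₁ ∧ ⋯ ∧ t_{k+1})`.  The left depth of that node is
`p.count Dir.L`. -/
def IsRightKRot (k : ℕ) (p : List Dir) (t t' : BTree) : Prop :=
  ∃ (t₀ t₁ : BTree) (rest : List BTree), rest.length = k ∧
    subtreeAt t p = some (leftAssoc t₀ (t₁ :: rest)) ∧
    replaceAt t p (BTree.node t₀ (leftAssoc t₁ rest)) = some t'

/-- `IsTopOf s u`: `s` is a subtree of `u` rooted at the root of `u`. -/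
def IsTopOf : BTree → BTree → Prop
  | BTree.leaf, _ => True
  | BTree.node l r, BTree.node l' r' => IsTopOf l l' ∧ IsTopOf r r'
  | BTree.node _ _, BTree.leaf => False

/-- `t` contains `s` at left depth `δ`: `t` has a subtree equal to `s` rooted at a node
of left depth `δ`. -/
def ContainsAt (t s : BTree) (δ : ℕ) : Prop :=
  ∃ (p : List Dir) (u : BTree), subtreeAt t p = some u ∧ p.count Dir.L = δ ∧ IsTopOf s u

/-- `t` avoids `s` at left depth `δ`. -/
def AvoidsAt (t s : BTree) (δ : ℕ) : Prop := ¬ ContainsAt t s δ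

/-- `comb_k`: the left-to-right `∧`-product of `k+1` single leaves. -/
def comb (k : ℕ) : BTree := leftAssoc BTree.leaf (List.replicate k BTree.leaf)

/-- `comb_k^1 := t₀ ∧ comb_k` with `t₀` a single leaf. -/
def comb1 (k : ℕ) : BTree := BTree.node BTree.leaf (comb k)

/-- One left `k`-rotation step, at a node of left depth at least `d-1`, from `t` to `t'`. -/
def LeftRotStep (d k : ℕ) (t t' : BTree) : Prop :=
  ∃ p : List Dir, d - 1 ≤ p.count Dir.L ∧ IsRightKRot k p t' t

/-- The `(d;k)`-order: `s ≤ t` iff `s` is obtained from `t` by finitely many left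
`k`-rotations at nodes of left depth at least `d-1`. -/
def dkLE (d k : ℕ) (s t : BTree) : Prop := Relation.ReflTransGen (LeftRotStep d k) t s

/-- `t` is `(d;k)`-minimal. -/
def dkMinimal (d k : ℕ) (t : BTree) : Prop := ∀ s, dkLE d k s t → s = t

/-- `t` is `(d;k)`-maximal. -/
def dkMaximal (d k : ℕ) (t : BTree) : Prop := ∀ s, dkLE d k t s → s = t

/-!
A rotation at a node of left depth `e` only changes left depths that exceed `e`, and changes them
by multiples of `k`; this is the easy direction.

Conversely, if `d ≥ 2`, the relation `~_k^d` sees the first entry of `ld t` that is at most `1`,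
which is the last leaf of the left subtree. Hence it splits along the root, `d` drops by one on the
left subtree, and the statement reduces to `d = 1`. There, left `k`-rotations lead to a tree in
which the left spine of every right child has fewer than `k` edges. For such a tree consecutive
left depths satisfy `a ≤ b + 1 < a + k`, so that, read from right to left starting from the final
`0`, the residues modulo `k` determine the left depths, and these determine the tree.
-/

section Forall₂

variable {α β : Type*}

theorem forall₂_and_iff {R S : α → β → Prop} {xs : List α} {ys : List β} :
    List.Forall₂ (fun a b => R a b ∧ S a b) xs ys ↔
      List.Forall₂ R xs ys ∧ List.Forall₂ S xs ys := by
  simp only [List.forall₂_iff_zip]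
  grind

instance forall₂_symm {R : α → α → Prop} [Std.Symm R] : Std.Symm (List.Forall₂ R) where
  symm _ _ h := (h.imp fun _ _ => symm_of R).flip

instance forall₂_isTrans {R : α → α → Prop} [IsTrans α R] : IsTrans (List α) (List.Forall₂ R) where
  trans xs ys zs hxy hyz := by
    induction hxy generalizing zs with
    | nil => exact hyz
    | cons hab _ ih =>
      cases hyz with
      | cons hbc hyz => exact .cons (trans_of R hab hbc) (ih _ hyz)

theorem forall₂_split_of_iff {R : α → β → Prop} {p : α → Prop} {q : β → Prop}
    (hpq : ∀ a b, R a b → (p a ↔ q b)) {xs ys : List α} {xs' ys' : List β} {c : α} {c' : β}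
    (hxs : ∀ x ∈ xs, p x) (hc : ¬p c) (hxs' : ∀ x ∈ xs', q x) (hc' : ¬q c')
    (h : List.Forall₂ R (xs ++ c :: ys) (xs' ++ c' :: ys')) :
    List.Forall₂ R (xs ++ [c]) (xs' ++ [c']) ∧ List.Forall₂ R ys ys' := by
  induction xs generalizing xs' with
  | nil => cases xs' <;> grind [List.forall₂_cons, List.forall₂_nil_left_iff]
  | cons a xs ih => cases xs' <;> grind [List.forall₂_cons]

theorem eq_of_isChain_of_forall₂ {R S : α → α → Prop}
    (hRS : ∀ a a' b, R a b → R a' b → S a a' → a = a') {xs ys : List α}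
    (hxs : xs.IsChain R) (hys : ys.IsChain R) (hlast : xs.getLast? = ys.getLast?)
    (h : List.Forall₂ S xs ys) : xs = ys := by
  induction h with
  | nil => rfl
  | @cons a a' xs ys haa' h ih =>
    cases h with
    | nil => simpa using hlast
    | cons _ _ =>
      rw [List.isChain_cons_cons] at hxs hys
      have htail := ih hxs.2 hys.2 (by simpa only [List.getLast?_cons_cons] using hlast)
      obtain ⟨rfl, -⟩ := List.cons.inj htail
      rw [hRS a a' _ hxs.1 hys.1 haa', htail]

end Forall₂

namespace BTree

section LeftDepth

theorem ld_leaf : ld leaf = [0] := rfl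

theorem ld_node (l r : BTree) : ld (node l r) = (ld l).map (· + 1) ++ ld r := by
  simp [ld, leafDepths, Function.comp_def]

theorem exists_ld_eq_concat_zero (t : BTree) :
    ∃ xs : List ℕ, (∀ x ∈ xs, 0 < x) ∧ ld t = xs ++ [0] := by
  induction t with
  | leaf => exact ⟨[], by simp, rfl⟩
  | node l r _ ihr =>
    obtain ⟨xs, hxs, hr⟩ := ihr
    refine ⟨(ld l).map (· + 1) ++ xs, ?_, by rw [ld_node, hr, List.append_assoc]⟩
    simpa [or_imp, forall_and] using hxs

theorem getLast?_ld (t : BTree) : (ld t).getLast? = some 0 := by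
  obtain ⟨xs, -, ht⟩ := exists_ld_eq_concat_zero t
  simp [ht]

theorem ld_ne_nil (t : BTree) : ld t ≠ [] := by
  obtain ⟨xs, -, ht⟩ := exists_ld_eq_concat_zero t
  simp [ht]

theorem length_ld_node_ne_one (l r : BTree) : (ld (node l r)).length ≠ 1 := by
  have hl := List.length_pos_iff.2 (ld_ne_nil l)
  have hr := List.length_pos_iff.2 (ld_ne_nil r)
  rw [ld_node, List.length_append, List.length_map]
  lia

variable {P : ℕ → ℕ → Prop}

theorem eq_leaf_of_forall₂_ld {t : BTree} (h : List.Forall₂ P (ld leaf) (ld t)) : t = leaf := by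
  cases t with
  | leaf => rfl
  | node l r => exact absurd h.length_eq.symm (length_ld_node_ne_one l r)

/- Incrementing the entries of `ld l` makes its last entry, a `0`, the first entry of
`ld (node l r)` that is less than `2`. -/
theorem forall₂_ld_of_node (hP : ∀ a b, P a b → (2 ≤ a ↔ 2 ≤ b)) {l r l' r' : BTree}
    (h : List.Forall₂ P (ld (node l r)) (ld (node l' r'))) :
    List.Forall₂ (fun a b => P (a + 1) (b + 1)) (ld l) (ld l') ∧
      List.Forall₂ P (ld r) (ld r') := by
  obtain ⟨xs, hxs, hl⟩ := exists_ld_eq_concat_zero l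
  obtain ⟨xs', hxs', hl'⟩ := exists_ld_eq_concat_zero l'
  have hmap {zs : List ℕ} (hzs : ∀ z ∈ zs, 0 < z) : ∀ z ∈ zs.map (· + 1), 2 ≤ z := by
    simpa [Nat.succ_le_iff] using hzs
  have hsplit : List.Forall₂ P (xs.map (· + 1) ++ 1 :: ld r) (xs'.map (· + 1) ++ 1 :: ld r') := by
    simpa [ld_node, hl, hl'] using h
  obtain ⟨hleft, hright⟩ :=
    forall₂_split_of_iff hP (hmap hxs) (by simp) (hmap hxs') (by simp) hsplit
  refine ⟨?_, hright⟩
  rw [← List.forall₂_map_right_iff (R := fun a b => P (a + 1) b), ← List.forall₂_map_left_iff]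
  simpa [hl, hl'] using hleft

theorem exists_eq_node_of_forall₂_ld (hP : ∀ a b, P a b → (2 ≤ a ↔ 2 ≤ b)) {l r t : BTree}
    (h : List.Forall₂ P (ld (node l r)) (ld t)) :
    ∃ l' r', t = node l' r' ∧ List.Forall₂ (fun a b => P (a + 1) (b + 1)) (ld l) (ld l') ∧
      List.Forall₂ P (ld r) (ld r') := by
  cases t with
  | leaf => exact absurd h.length_eq (length_ld_node_ne_one l r)
  | node l' r' => exact ⟨l', r', rfl, forall₂_ld_of_node hP h⟩

theorem ld_injective : Function.Injective ld := by
  intro t t' h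
  rw [← List.forall₂_eq_eq_eq] at h
  induction t generalizing t' with
  | leaf => exact (eq_leaf_of_forall₂_ld h).symm
  | node l r ihl ihr =>
    obtain ⟨l', r', rfl, hl, hr⟩ := exists_eq_node_of_forall₂_ld (by rintro a _ rfl; rfl) h
    rw [ihl (hl.imp fun _ _ => Nat.succ.inj), ihr hr]

theorem exists_ld_leftAssoc_eq (rest : List BTree) :
    ∃ ys : List ℕ, ∀ t, ld (leftAssoc t rest) = (ld t).map (· + rest.length) ++ ys := by
  induction rest with
  | nil => exact ⟨[], by simp [leftAssoc]⟩
  | cons s rest ih =>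
    obtain ⟨ys, hys⟩ := ih
    refine ⟨(ld s).map (· + rest.length) ++ ys, fun t => ?_⟩
    calc ld (leftAssoc t (s :: rest))
        = (ld (node t s)).map (· + rest.length) ++ ys := hys (node t s)
      _ = (ld t).map (· + (s :: rest).length) ++ ((ld s).map (· + rest.length) ++ ys) := by
        simp [ld_node, Function.comp_def, Nat.add_right_comm, ← Nat.add_assoc]

end LeftDepth

section LeftSpine

/-- The length of the left spine of a tree: the number of edges from the root down to leaf `0`,
that is, the left depth of leaf `0`. -/
def leftSpine : BTree → ℕ
  | leaf => 0
  | node l _ => l.leftSpine + 1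

theorem head?_ld (t : BTree) : (ld t).head? = some t.leftSpine := by
  induction t with
  | leaf => rfl
  | node l r ihl _ => simp [ld_node, ihl, leftSpine]

theorem leftSpine_leftAssoc (t : BTree) (rest : List BTree) :
    (leftAssoc t rest).leftSpine = t.leftSpine + rest.length := by
  induction rest generalizing t with
  | nil => rfl
  | cons s rest ih =>
    rw [List.length_cons, ← Nat.succ_add_eq_add_succ]
    exact ih (node t s)

theorem exists_eq_leftAssoc {m : ℕ} {t : BTree} (h : m ≤ t.leftSpine) :
    ∃ s rest, rest.length = m ∧ t = leftAssoc s rest := by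
  induction m generalizing t with
  | zero => exact ⟨t, [], rfl, rfl⟩
  | succ m ih =>
    cases t with
    | leaf => simp [leftSpine] at h
    | node l r =>
      obtain ⟨s, rest, hlen, rfl⟩ := ih (Nat.le_of_succ_le_succ h)
      exact ⟨s, rest ++ [r], by simp [hlen], by simp [leftAssoc]⟩

end LeftSpine

section Normal

variable {k : ℕ}

/-- The normal form of a tree under `k`-rotations: no right child has a left spine of length `k`
or more. For `k ≥ 1` these are the trees to which no left `k`-rotation applies, i.e. the
`(1;k)`-minimal trees. -/
def IsNormal (k : ℕ) : BTree → Prop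
  | leaf => True
  | node l r => IsNormal k l ∧ IsNormal k r ∧ r.leftSpine < k

theorem isNormal_leftAssoc {t : BTree} {rest : List BTree} :
    IsNormal k (leftAssoc t rest) ↔
      IsNormal k t ∧ ∀ s ∈ rest, IsNormal k s ∧ s.leftSpine < k := by
  induction rest generalizing t with
  | nil => simp [leftAssoc]
  | cons s rest ih =>
    calc IsNormal k (leftAssoc t (s :: rest))
        ↔ IsNormal k (node t s) ∧ ∀ u ∈ rest, IsNormal k u ∧ u.leftSpine < k := ih
      _ ↔ _ := by simp only [IsNormal, List.forall_mem_cons, and_assoc]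

theorem IsNormal.isChain_ld {t : BTree} (h : IsNormal k t) :
    (ld t).IsChain fun a b => a ≤ b + 1 ∧ b + 1 < a + k := by
  induction t with
  | leaf => simp [ld_leaf]
  | node l r ihl ihr =>
    obtain ⟨hl, hr, hspine⟩ := h
    rw [ld_node]
    refine List.IsChain.append ?_ (ihr hr) ?_
    · exact List.isChain_map_of_isChain _ (by lia) (ihl hl)
    · simp only [List.getLast?_map, getLast?_ld, head?_ld, Option.map_some, Option.mem_some_iff]
      lia

theorem IsNormal.eq_of_modListEq {t t' : BTree} (ht : IsNormal k t) (ht' : IsNormal k t')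
    (h : ModListEq k t.ld t'.ld) : t = t' := by
  refine ld_injective (eq_of_isChain_of_forall₂ ?_ ht.isChain_ld ht'.isChain_ld ?_ h)
  · intro a a' b hab ha'b hmod
    exact Nat.ModEq.eq_of_abs_lt hmod (abs_lt.2 (by lia))
  · rw [getLast?_ld, getLast?_ld]

end Normal

end BTree

section DkRel

open BTree

variable {d k : ℕ}

/-- The relation imposed on a single pair of entries by `~_k^d`. -/
def EntryRel (d k a b : ℕ) : Prop := a % k = b % k ∧ (min a b < d → a = b)

instance : Std.Refl (EntryRel d k) where
  refl _ := ⟨rfl, fun _ => rfl⟩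

instance : Std.Symm (EntryRel d k) where
  symm _ _ h := ⟨h.1.symm, fun hlt => (h.2 (by rwa [min_comm])).symm⟩

instance : IsTrans ℕ (EntryRel d k) where
  trans a b c := by
    rintro ⟨hab, hab'⟩ ⟨hbc, hbc'⟩
    exact ⟨hab.trans hbc, by lia⟩

theorem entryRel_succ_succ {a b : ℕ} :
    EntryRel (d + 1) k (a + 1) (b + 1) ↔ EntryRel d k a b :=
  and_congr ⟨Nat.ModEq.add_right_cancel' 1, Nat.ModEq.add_right 1⟩ (by lia)

theorem dkRel_iff_forall₂ {t t' : BTree} :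
    DkRel d k t t' ↔ List.Forall₂ (EntryRel d k) t.ld t'.ld :=
  forall₂_and_iff.symm

instance : Std.Refl (DkRel d k) where
  refl t := dkRel_iff_forall₂.2 (List.forall₂_refl t.ld)

instance : Std.Symm (DkRel d k) where
  symm _ _ h := dkRel_iff_forall₂.2 (symm (dkRel_iff_forall₂.1 h))

instance : IsTrans BTree (DkRel d k) where
  trans _ _ _ h h' :=
    dkRel_iff_forall₂.2 (_root_.trans (dkRel_iff_forall₂.1 h) (dkRel_iff_forall₂.1 h'))

theorem DkRel.mono {d' : ℕ} (hd : d' ≤ d) {t t' : BTree} (h : DkRel d k t t') : DkRel d' k t t' :=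
  ⟨h.1, h.2.imp fun _ _ hab hlt => hab (hlt.trans_le hd)⟩

theorem DkRel.node_congr {l l' r r' : BTree} (hl : DkRel d k l l') (hr : DkRel (d + 1) k r r') :
    DkRel (d + 1) k (node l r) (node l' r') := by
  rw [dkRel_iff_forall₂, ld_node, ld_node] at *
  refine List.rel_append ?_ hr
  rw [List.forall₂_map_left_iff, List.forall₂_map_right_iff]
  exact hl.imp fun _ _ => entryRel_succ_succ.2

theorem DkRel.exists_eq_node {l r t : BTree} (h : DkRel (d + 2) k (node l r) t) :
    ∃ l' r', t = node l' r' ∧ DkRel (d + 1) k l l' ∧ DkRel (d + 2) k r r' := by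
  have hentry (a b : ℕ) (hab : EntryRel (d + 2) k a b) : 2 ≤ a ↔ 2 ≤ b := by
    have := hab.2
    lia
  obtain ⟨l', r', rfl, hl, hr⟩ := exists_eq_node_of_forall₂_ld hentry (dkRel_iff_forall₂.1 h)
  exact ⟨l', r', rfl, dkRel_iff_forall₂.2 (hl.imp fun _ _ => entryRel_succ_succ.1),
    dkRel_iff_forall₂.2 hr⟩

theorem dkRel_one_leftAssoc (t₀ t₁ : BTree) (rest : List BTree) :
    DkRel 1 rest.length (leftAssoc (node t₀ t₁) rest) (node t₀ (leftAssoc t₁ rest)) := by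
  obtain ⟨ys, hys⟩ := exists_ld_leftAssoc_eq rest
  rw [dkRel_iff_forall₂, hys, ld_node, ld_node, hys, List.map_append, List.append_assoc]
  refine List.rel_append ?_ (List.forall₂_refl _)
  rw [List.map_map, List.forall₂_map_left_iff, List.forall₂_map_right_iff]
  exact List.forall₂_same.2 fun a _ => ⟨Nat.add_mod_right (a + 1) rest.length, by simp⟩

end DkRel

section Rotation

open BTree

variable {k : ℕ} {p : List Dir} {t t' : BTree}

theorem isRightKRot_nil_iff :
    IsRightKRot k [] t t' ↔ ∃ t₀ t₁ rest, rest.length = k ∧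
      t = leftAssoc (node t₀ t₁) rest ∧ t' = node t₀ (leftAssoc t₁ rest) := by
  simp only [IsRightKRot, subtreeAt, replaceAt, Option.some.injEq, eq_comm (b := t')]
  rfl

theorem isRightKRot_cons_L_iff :
    IsRightKRot k (Dir.L :: p) t t' ↔
      ∃ l l' r, t = node l r ∧ t' = node l' r ∧ IsRightKRot k p l l' := by
  cases t <;> simp only [IsRightKRot, subtreeAt, replaceAt, Option.map_eq_some_iff] <;> grind

theorem isRightKRot_cons_R_iff :
    IsRightKRot k (Dir.R :: p) t t' ↔
      ∃ l r r', t = node l r ∧ t' = node l r' ∧ IsRightKRot k p r r' := by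
  cases t <;> simp only [IsRightKRot, subtreeAt, replaceAt, Option.map_eq_some_iff] <;> grind

theorem IsRightKRot.dkRel (h : IsRightKRot k p t t') : DkRel (p.count Dir.L + 1) k t t' := by
  induction p generalizing t t' with
  | nil =>
    obtain ⟨t₀, t₁, rest, rfl, rfl, rfl⟩ := isRightKRot_nil_iff.1 h
    exact dkRel_one_leftAssoc t₀ t₁ rest
  | cons x p ih =>
    cases x with
    | L =>
      obtain ⟨l, l', r, rfl, rfl, hl⟩ := isRightKRot_cons_L_iff.1 h
      rw [List.count_cons_self]
      exact (ih hl).node_congr (refl r)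
    | R =>
      obtain ⟨l, r, r', rfl, rfl, hr⟩ := isRightKRot_cons_R_iff.1 h
      rw [List.count_cons_of_ne (by decide)]
      exact DkRel.node_congr (refl l) (ih hr)

end Rotation

section RotConnected

open BTree

variable {e k : ℕ} {t t' l l' r r' : BTree}

/-- One left or right `k`-rotation at a node of left depth at least `e`. The bound `e` plays the
role of `d - 1`. -/
def RotStep (e k : ℕ) (t t' : BTree) : Prop :=
  ∃ p : List Dir, e ≤ p.count Dir.L ∧ (IsRightKRot k p t t' ∨ IsRightKRot k p t' t)

/-- Connectedness by `k`-rotations at nodes of left depth at least `e`: the trees lie in the same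
component of the Hasse diagram of the `(e+1;k)`-order. -/
def RotConnected (e k : ℕ) : BTree → BTree → Prop := Relation.ReflTransGen (RotStep e k)

instance : Std.Symm (RotStep e k) where
  symm _ _ := fun ⟨p, hp, h⟩ => ⟨p, hp, h.symm⟩

theorem RotConnected.symm (h : RotConnected e k t t') : RotConnected e k t' t :=
  symm_of (Relation.ReflTransGen (RotStep e k)) h

theorem RotStep.dkRel (h : RotStep e k t t') : DkRel (e + 1) k t t' := by
  obtain ⟨p, hp, h | h⟩ := h
  · exact h.dkRel.mono (Nat.succ_le_succ hp)
  · exact symm (h.dkRel.mono (Nat.succ_le_succ hp))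

theorem RotConnected.dkRel (h : RotConnected e k t t') : DkRel (e + 1) k t t' :=
  Relation.reflTransGen_le_of_le (r' := RotStep e k) (fun _ _ => RotStep.dkRel) t t' h

theorem RotStep.node_left (h : RotStep (e - 1) k l l') (r : BTree) :
    RotStep e k (node l r) (node l' r) := by
  obtain ⟨p, hp, h⟩ := h
  have hrot {s s' : BTree} (hs : IsRightKRot k p s s') :
      IsRightKRot k (Dir.L :: p) (node s r) (node s' r) :=
    isRightKRot_cons_L_iff.2 ⟨s, s', r, rfl, rfl, hs⟩
  exact ⟨Dir.L :: p, by rw [List.count_cons_self]; lia, h.imp hrot hrot⟩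

theorem RotStep.node_right (l : BTree) (h : RotStep e k r r') :
    RotStep e k (node l r) (node l r') := by
  obtain ⟨p, hp, h⟩ := h
  have hrot {s s' : BTree} (hs : IsRightKRot k p s s') :
      IsRightKRot k (Dir.R :: p) (node l s) (node l s') :=
    isRightKRot_cons_R_iff.2 ⟨l, s, s', rfl, rfl, hs⟩
  exact ⟨Dir.R :: p, by simpa using hp, h.imp hrot hrot⟩

/- The truncated `e - 1` covers `e = 0`, where rotations at any node of `l` are allowed. -/
theorem RotConnected.node_congr (hl : RotConnected (e - 1) k l l') (hr : RotConnected e k r r') :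
    RotConnected e k (node l r) (node l' r') :=
  (Relation.ReflTransGen.lift (node · r) (fun _ _ h => h.node_left r) _ _ hl).trans
    (Relation.ReflTransGen.lift (node l') (fun _ _ h => h.node_right l') _ _ hr)

theorem RotConnected.leftAssoc_congr (h : RotConnected 0 k t t') (rest : List BTree) :
    RotConnected 0 k (leftAssoc t rest) (leftAssoc t' rest) := by
  induction rest generalizing t t' with
  | nil => exact h
  | cons _ _ ih => exact ih (h.node_congr .refl)

theorem rotConnected_leftAssoc (t₀ t₁ : BTree) (rest : List BTree) :
    RotConnected 0 rest.length (leftAssoc (node t₀ t₁) rest) (node t₀ (leftAssoc t₁ rest)) :=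
  .single ⟨[], Nat.zero_le _, .inl (isRightKRot_nil_iff.2 ⟨t₀, t₁, rest, rfl, rfl, rfl⟩)⟩

end RotConnected

section Completeness

open BTree

variable {e k : ℕ}

theorem exists_isNormal_rotConnected_node (hk : 0 < k) {l r : BTree} (hl : IsNormal k l)
    (hr : IsNormal k r) : ∃ u, IsNormal k u ∧ RotConnected 0 k (node l r) u := by
  induction hm : r.leftSpine using Nat.strong_induction_on generalizing r with
  | h m ih =>
    subst hm
    obtain hlt | hle := lt_or_ge r.leftSpine k
    · exact ⟨node l r, ⟨hl, hr, hlt⟩, .refl⟩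
    · obtain ⟨s, rest, rfl, rfl⟩ := exists_eq_leftAssoc hle
      obtain ⟨hs, hrest⟩ := isNormal_leftAssoc.1 hr
      have hlt : s.leftSpine < (leftAssoc s rest).leftSpine := by
        rw [leftSpine_leftAssoc]
        lia
      obtain ⟨u, hu, hconn⟩ := ih _ hlt hs rfl
      exact ⟨leftAssoc u rest, isNormal_leftAssoc.2 ⟨hu, hrest⟩,
        (rotConnected_leftAssoc l s rest).symm.trans (hconn.leftAssoc_congr rest)⟩

theorem exists_isNormal_rotConnected (hk : 0 < k) (t : BTree) :
    ∃ u, IsNormal k u ∧ RotConnected 0 k t u := by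
  induction t with
  | leaf => exact ⟨leaf, trivial, .refl⟩
  | node l r ihl ihr =>
    obtain ⟨l', hl', hconnl⟩ := ihl
    obtain ⟨r', hr', hconnr⟩ := ihr
    obtain ⟨u, hu, hconn⟩ := exists_isNormal_rotConnected_node hk hl' hr'
    exact ⟨u, hu, (hconnl.node_congr hconnr).trans hconn⟩

theorem DkRel.rotConnected_zero (hk : 0 < k) {t t' : BTree} (h : DkRel 0 k t t') :
    RotConnected 0 k t t' := by
  obtain ⟨u, hu, htu⟩ := exists_isNormal_rotConnected hk t
  obtain ⟨u', hu', htu'⟩ := exists_isNormal_rotConnected hk t'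
  have huu' : DkRel 0 k u u' :=
    _root_.trans (htu.symm.dkRel.mono zero_le_one) (_root_.trans h (htu'.dkRel.mono zero_le_one))
  obtain rfl : u = u' := hu.eq_of_modListEq hu' huu'.1
  exact htu.trans htu'.symm

theorem DkRel.rotConnected (hk : 0 < k) {t t' : BTree} (h : DkRel (e + 1) k t t') :
    RotConnected e k t t' := by
  induction e generalizing t t' with
  | zero => exact (h.mono zero_le_one).rotConnected_zero hk
  | succ e ihe =>
    induction t generalizing t' with
    | leaf =>
      obtain rfl := eq_leaf_of_forall₂_ld h.1
      exact .refl
    | node l r _ ihr =>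
      obtain ⟨l', r', rfl, hl, hr⟩ := h.exists_eq_node
      exact RotConnected.node_congr (e := e + 1) (ihe hl) (ihr hr)

end Completeness

/-- for `d,k ≥ 1` and `t,t' ∈ T_n`, `ld(t) ~_k^d ld(t')` iff `t'` can be
obtained from `t` by a finite sequence of left or right `k`-rotations, each performed at
a node of left depth at least `d-1`; i.e. the equivalence classes are exactly the
connected components of the Hasse diagram of the `(d;k)`-order. -/
theorem stmt12 (d k n : ℕ) (hd : 1 ≤ d) (hk : 1 ≤ k) (t t' : BTree)
    (ht : t.numLeaves = n + 1) (ht' : t'.numLeaves = n + 1) :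
    DkRel d k t t' ↔
      Relation.ReflTransGen
        (fun u u' => ∃ p : List Dir, d - 1 ≤ p.count Dir.L ∧
          (IsRightKRot k p u u' ∨ IsRightKRot k p u' u)) t t' := by
  obtain ⟨e, rfl⟩ : ∃ e, d = e + 1 := Nat.exists_eq_succ_of_ne_zero (Nat.one_le_iff_ne_zero.1 hd)
  exact ⟨DkRel.rotConnected hk, RotConnected.dkRel⟩
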